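/- Let 0 < α < 1, 1 < β < 2, p, q > 0, m ≥ 1 an integer, μ = (2mπ)², and suppose Δ_m := p^β E_{β,β+1}(−μ p^β) + p E_{β,2}(−μ p^β) − q^α E_{α,α+1}(−μ q^α) = 0. Let c ≠ 0 and set f₂ = c E_{α,1}(−μ q^α), a = −c q^α E_{α,α+1}(−μ q^α). Define V(t) = a E_{α,1}(−μ t^α) + f₂ t^α E_{α,α+1}(−μ t^α) for 0 ≤ t ≤ q and W(t) = a E_{β,1}(−μ(−t)^β) − t c E_{β,2}(−μ(−t)^β) + f₂ (−t)^β E_{β,β+1}(−μ(−t)^β) for −p ≤ t ≤ 0. Then: (i) (D^α V)(t) + μ V(t) = f₂ for t ∈ (0,q); (ii) (D_{t0}^β W)(t) + μ W(t) = f₂ for t ∈ (−p,0); (iii) V(0) = W(0); (iv) V(q) = 0 and W(−p) = 0; (v) lim_{t→0+} (D^α V)(t) = lim_{t→0−} dW/d(−t)(t) = c. Hence the m-th sine-mode transmission problem has a nontrivial solution when Δ_m = 0. -/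

import Mathlib

open MeasureTheory Real

/-- The two-parameter Mittag-Leffler function `E_{a,b}(z) = ∑_{j=0}^∞ z^j / Γ(a j + b)`. -/
noncomputable def mittagLeffler (a b z : ℝ) : ℝ := ∑' j : ℕ, z ^ j / Real.Gamma (a * j + b)

theorem rpow_mul_exp_neg_le_Gamma {M s : ℝ} (hM : 0 < M) (hs : 1 ≤ s) :
    exp (-M) * M ^ (s - 1) ≤ Real.Gamma s := by
  have hs0 : 0 < s := by linarith
  have hint := Real.GammaIntegral_convergent hs0
  have hsub : Set.Ioi M ⊆ Set.Ioi 0 := Set.Ioi_subset_Ioi hM.le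
  rw [Real.Gamma_eq_integral hs0, ← integral_exp_neg_Ioi M, ← integral_mul_const]
  calc ∫ x in Set.Ioi M, exp (-x) * M ^ (s - 1)
      ≤ ∫ x in Set.Ioi M, exp (-x) * x ^ (s - 1) := by
        refine setIntegral_mono_on ?_ (hint.mono_set hsub) measurableSet_Ioi ?_
        · exact Integrable.mul_const (integrableOn_exp_neg_Ioi M) _
        · intro x hx
          have hx : M < x := hx
          gcongr
    _ ≤ _ := by
        refine setIntegral_mono_set hint ?_ hsub.eventuallyLE
        filter_upwards [ae_restrict_mem measurableSet_Ioi] with x hx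
        have : (0 : ℝ) < x := hx
        positivity

theorem summable_mittagLeffler {a : ℝ} (ha : 0 < a) (b z : ℝ) :
    Summable fun j : ℕ => z ^ j / Real.Gamma (a * j + b) := by
  obtain ⟨M, hM, hMz⟩ : ∃ M : ℝ, 0 < M ∧ |z| < M ^ a :=
    ((Filter.eventually_gt_atTop 0).and
      ((tendsto_rpow_atTop ha).eventually_gt_atTop |z|)).exists
  have hMa : 0 < M ^ a := rpow_pos_of_pos hM a
  have hgeo : Summable fun j : ℕ => (|z| / M ^ a) ^ j * (exp M * M ^ (1 - b)) :=
    (summable_geometric_of_lt_one (by positivity) ((div_lt_one hMa).2 hMz)).mul_right _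
  refine hgeo.of_norm_bounded_eventually_nat ?_
  have hlarge : ∀ᶠ j : ℕ in Filter.atTop, 1 - b ≤ a * j :=
    (tendsto_natCast_atTop_atTop.const_mul_atTop ha).eventually_ge_atTop _
  filter_upwards [hlarge] with j hj
  have hs : 1 ≤ a * j + b := by linarith
  have hΓ := rpow_mul_exp_neg_le_Gamma hM hs
  have hΓ0 : 0 < Real.Gamma (a * j + b) := Real.Gamma_pos_of_pos (by linarith)
  rw [norm_div, norm_pow, Real.norm_eq_abs, Real.norm_eq_abs, abs_of_pos hΓ0]
  have hE : exp (-M) * M ^ (a * j + b - 1) = ((exp M * M ^ (1 - b)) / (M ^ a) ^ j)⁻¹ := by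
    rw [← rpow_natCast, ← rpow_mul hM.le, inv_div, Real.exp_neg,
      show a * j + b - 1 = a * j - (1 - b) by ring, rpow_sub hM]
    field_simp
  rw [hE] at hΓ
  have : (0:ℝ) < ((exp M * M ^ (1 - b)) / (M ^ a) ^ j)⁻¹ := by positivity
  calc |z| ^ j / Real.Gamma (a * j + b) ≤ |z| ^ j / ((exp M * M ^ (1 - b)) / (M ^ a) ^ j)⁻¹ := by
        gcongr
    _ = _ := by rw [div_inv_eq_mul, div_pow]; ring

theorem continuous_mittagLeffler {a : ℝ} (ha : 0 < a) (b : ℝ) :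
    Continuous (mittagLeffler a b) := by
  rw [continuous_iff_continuousAt]
  intro x
  have hcont : ContinuousOn (mittagLeffler a b) (Metric.closedBall 0 (|x| + 1)) := by
    refine continuousOn_tsum (fun j => by fun_prop)
      (summable_mittagLeffler ha b (|x| + 1)).norm fun j z hz => ?_
    rw [mem_closedBall_zero_iff] at hz
    rw [norm_div, norm_div, norm_pow, norm_pow]
    gcongr
    exact hz.trans (le_abs_self _)
  refine hcont.continuousAt (Metric.closedBall_mem_nhds_of_mem ?_)
  simp

theorem mittagLeffler_zero (a b : ℝ) : mittagLeffler a b 0 = 1 / Real.Gamma b := by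
  rw [mittagLeffler, tsum_eq_single 0 fun j hj => by simp [hj]]
  simp

theorem mittagLeffler_eq_add {a : ℝ} (ha : 0 < a) (b z : ℝ) :
    mittagLeffler a b z = 1 / Real.Gamma b + z * mittagLeffler a (a + b) z := by
  rw [mittagLeffler, (summable_mittagLeffler ha b z).tsum_eq_zero_add, mittagLeffler,
    ← tsum_mul_left]
  congr 1
  · simp
  · refine tsum_congr fun j => ?_
    push_cast
    rw [show a * (j + 1) + b = a * j + (a + b) by ring, pow_succ]
    ring

theorem integral_rpow_mul_sub_rpow {s r t : ℝ} (hs : 0 < s) (hr : 0 < r) (ht : 0 < t) :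
    ∫ z in (0:ℝ)..t, z ^ (s - 1) * (t - z) ^ (r - 1) =
      t ^ (s + r - 1) * (Real.Gamma s * Real.Gamma r / Real.Gamma (s + r)) := by
  have h := Complex.betaIntegral_scaled (s : ℂ) r ht
  rw [Complex.betaIntegral_eq_Gamma_mul_div _ _ (by simpa) (by simpa)] at h
  rw [← Complex.ofReal_inj, ← intervalIntegral.integral_ofReal]
  push_cast
  rw [Complex.ofReal_cpow ht.le, ← Complex.Gamma_ofReal, ← Complex.Gamma_ofReal,
    ← Complex.Gamma_ofReal]
  push_cast
  rw [← h]
  refine intervalIntegral.integral_congr fun z hz => ?_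
  rw [Set.uIcc_of_le ht.le] at hz
  rw [Complex.ofReal_cpow hz.1, Complex.ofReal_cpow (sub_nonneg.2 hz.2)]
  push_cast
  rfl

theorem intervalIntegrable_rpow_mul_sub_rpow {s r t : ℝ} (hs : 0 < s) (hr : 0 < r) (ht : 0 < t) :
    IntervalIntegrable (fun z => z ^ (s - 1) * (t - z) ^ (r - 1)) volume 0 t := by
  by_contra hcon
  have h := integral_rpow_mul_sub_rpow hs hr ht
  rw [intervalIntegral.integral_undef hcon] at h
  have := Real.Gamma_pos_of_pos hs
  have := Real.Gamma_pos_of_pos hr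
  have := Real.Gamma_pos_of_pos (add_pos hs hr)
  have : 0 < t ^ (s + r - 1) * (Real.Gamma s * Real.Gamma r / Real.Gamma (s + r)) := by
    positivity
  linarith

/-- The kernel `t ^ (b - 1) * E_{a,b}(l * t ^ a)`, on which fractional integration of order `γ`
acts by the shift `b ↦ b + γ`. -/
noncomputable def mittagLefflerKernel (a b l t : ℝ) : ℝ :=
  t ^ (b - 1) * mittagLeffler a b (l * t ^ a)

theorem mittagLefflerKernel_eq_tsum {a b l t : ℝ} (ht : 0 < t) :
    mittagLefflerKernel a b l t =
      ∑' j : ℕ, l ^ j / Real.Gamma (a * j + b) * t ^ (a * j + b - 1) := by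
  rw [mittagLefflerKernel, mittagLeffler, ← tsum_mul_left]
  refine tsum_congr fun j => ?_
  rw [mul_pow, ← rpow_natCast (t ^ a), ← rpow_mul ht.le,
    show a * j + b - 1 = (b - 1) + a * j by ring, rpow_add ht]
  ring

theorem summable_mittagLefflerKernel {a : ℝ} (ha : 0 < a) (b l : ℝ) {t : ℝ} (ht : 0 < t) :
    Summable fun j : ℕ => l ^ j / Real.Gamma (a * j + b) * t ^ (a * j + b - 1) := by
  refine ((summable_mittagLeffler ha b (l * t ^ a)).mul_left (t ^ (b - 1))).congr fun j => ?_
  rw [mul_pow, ← rpow_natCast (t ^ a), ← rpow_mul ht.le,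
    show a * j + b - 1 = (b - 1) + a * j by ring, rpow_add ht]
  ring

theorem integral_mittagLefflerKernel_mul_sub_rpow {a b r : ℝ} (ha : 0 < a) (hb : 0 < b)
    (hr : 0 < r) (l : ℝ) {t : ℝ} (ht : 0 < t) :
    ∫ z in (0:ℝ)..t, mittagLefflerKernel a b l z * (t - z) ^ (r - 1) =
      Real.Gamma r * mittagLefflerKernel a (b + r) l t := by
  have hpos (j : ℕ) : 0 < a * j + b := by positivity
  have hterm (c : ℝ) (j : ℕ) :
      ∫ z in Set.Ioc 0 t, c ^ j / Real.Gamma (a * j + b) *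
        (z ^ (a * j + b - 1) * (t - z) ^ (r - 1)) =
      Real.Gamma r * (c ^ j / Real.Gamma (a * j + (b + r)) * t ^ (a * j + (b + r) - 1)) := by
    have := (Real.Gamma_pos_of_pos (hpos j)).ne'
    rw [integral_const_mul, ← intervalIntegral.integral_of_le ht.le,
      integral_rpow_mul_sub_rpow (hpos j) hr ht, ← add_assoc]
    field_simp
  have hsum := hasSum_integral_of_summable_integral_norm
    (μ := volume.restrict (Set.Ioc 0 t))
    (F := fun (j : ℕ) z => l ^ j / Real.Gamma (a * j + b) *
      (z ^ (a * j + b - 1) * (t - z) ^ (r - 1)))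
    (fun j => (((intervalIntegrable_iff_integrableOn_Ioc_of_le ht.le).1
      (intervalIntegrable_rpow_mul_sub_rpow (hpos j) hr ht))).const_mul _) ?_
  · simp_rw [hterm] at hsum
    rw [mittagLefflerKernel_eq_tsum ht, ← tsum_mul_left, hsum.tsum_eq,
      intervalIntegral.integral_of_le ht.le]
    refine setIntegral_congr_fun measurableSet_Ioc fun z hz => ?_
    rw [mittagLefflerKernel_eq_tsum hz.1, ← tsum_mul_right]
    exact tsum_congr fun j => by ring
  · refine ((summable_mittagLefflerKernel ha (b + r) |l| ht).mul_left (Real.Gamma r)).congr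
      fun j => ?_
    rw [← hterm]
    refine setIntegral_congr_fun measurableSet_Ioc fun z hz => ?_
    have h1 := rpow_nonneg hz.1.le (a * j + b - 1)
    have h2 := rpow_nonneg (sub_nonneg.2 hz.2) (r - 1)
    simp [abs_of_nonneg h1, abs_of_nonneg h2, abs_of_pos (Real.Gamma_pos_of_pos (hpos j))]

theorem continuousAt_mittagLefflerKernel {a : ℝ} (ha : 0 < a) (b l : ℝ) {t : ℝ} (ht : 0 < t) :
    ContinuousAt (mittagLefflerKernel a b l) t := by
  have h1 (s : ℝ) : ContinuousAt (fun x : ℝ => x ^ s) t := continuousAt_rpow_const _ _ (.inl ht.ne')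
  exact (h1 _).mul ((continuous_mittagLeffler ha b).continuousAt.comp
    (continuousAt_const.mul (h1 a)))

theorem intervalIntegrable_mittagLefflerKernel {a b : ℝ} (ha : 0 < a) (hb : 0 < b) (l t : ℝ) :
    IntervalIntegrable (mittagLefflerKernel a b l) volume 0 t :=
  (intervalIntegral.intervalIntegrable_rpow' (by linarith)).mul_continuousOn
    ((continuous_mittagLeffler ha b).comp
      (continuous_const.mul (continuous_id.rpow_const fun _ => .inr ha.le))).continuousOn

theorem hasDerivAt_mittagLefflerKernel {a b : ℝ} (ha : 0 < a) (hb : 0 < b) (l : ℝ) {t : ℝ}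
    (ht : 0 < t) :
    HasDerivAt (mittagLefflerKernel a (b + 1) l) (mittagLefflerKernel a b l t) t := by
  have hcont : ContinuousOn (mittagLefflerKernel a b l) (Set.Ioi 0) := fun x hx =>
    (continuousAt_mittagLefflerKernel ha b l hx).continuousWithinAt
  refine (intervalIntegral.integral_hasDerivAt_right
    (intervalIntegrable_mittagLefflerKernel ha hb l t)
    (hcont.stronglyMeasurableAtFilter isOpen_Ioi t ht)
    (continuousAt_mittagLefflerKernel ha b l ht)).congr_of_eventuallyEq ?_
  filter_upwards [lt_mem_nhds ht] with x hx
  simpa using (integral_mittagLefflerKernel_mul_sub_rpow ha hb one_pos l hx).symm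

theorem intervalIntegrable_mittagLefflerKernel_mul_sub_rpow {a b r : ℝ} (ha : 0 < a) (hb : 0 < b)
    (hr : 0 < r) (l : ℝ) {t : ℝ} (ht : 0 < t) :
    IntervalIntegrable (fun z => mittagLefflerKernel a b l z * (t - z) ^ (r - 1)) volume 0 t := by
  have h := (intervalIntegrable_rpow_mul_sub_rpow hb hr ht).mul_continuousOn
    ((continuous_mittagLeffler ha b).comp
      (continuous_const.mul (continuous_id.rpow_const fun _ => .inr ha.le)) :
        Continuous fun z : ℝ => mittagLeffler a b (l * z ^ a)).continuousOn
  refine h.congr fun z _ => ?_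
  simp only [mittagLefflerKernel, Function.comp]
  ring

theorem mittagLefflerKernel_one {a : ℝ} (ha : 0 < a) (l t : ℝ) :
    mittagLefflerKernel a 1 l t = 1 + l * mittagLefflerKernel a (a + 1) l t := by
  rw [mittagLefflerKernel, mittagLefflerKernel, mittagLeffler_eq_add ha]
  simp
  ring

theorem hasDerivAt_mittagLefflerKernel_one {a : ℝ} (ha : 0 < a) (l : ℝ) {t : ℝ} (ht : 0 < t) :
    HasDerivAt (mittagLefflerKernel a 1 l) (l * mittagLefflerKernel a a l t) t := by
  rw [funext (mittagLefflerKernel_one ha l)]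
  exact ((hasDerivAt_mittagLefflerKernel ha ha l ht).const_mul l).const_add 1

theorem continuous_mittagLefflerKernel {a b : ℝ} (ha : 0 < a) (hb : 1 ≤ b) (l : ℝ) :
    Continuous (mittagLefflerKernel a b l) :=
  (continuous_id.rpow_const fun _ => .inr (by linarith)).mul
    ((continuous_mittagLeffler ha b).comp
      (continuous_const.mul (continuous_id.rpow_const fun _ => .inr ha.le)))

theorem mittagLefflerKernel_zero (a l : ℝ) {b : ℝ} (hb : 1 < b) :
    mittagLefflerKernel a b l 0 = 0 := by
  rw [mittagLefflerKernel, zero_rpow (by linarith), zero_mul]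

/-- The Caputo derivative of order `α` of `t ↦ a + c t ^ α E_{α,α+1}(l t ^ α)`. -/
theorem caputo_const_add_mittagLefflerKernel {α : ℝ} (hα0 : 0 < α) (hα1 : α < 1) (a c l : ℝ)
    {V : ℝ → ℝ} (hV : ∀ t, V t = a + c * mittagLefflerKernel α (α + 1) l t) {t : ℝ} (ht : 0 < t) :
    (1 / Real.Gamma (1 - α)) * (∫ z in (0:ℝ)..t, deriv V z * (t - z) ^ (-α)) =
      c * mittagLefflerKernel α 1 l t := by
  have hderiv {z : ℝ} (hz : 0 < z) : deriv V z = c * mittagLefflerKernel α α l z := by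
    rw [funext hV]
    exact (((hasDerivAt_mittagLefflerKernel hα0 hα0 l hz).const_mul c).const_add a).deriv
  have hint : ∫ z in (0:ℝ)..t, deriv V z * (t - z) ^ (-α) =
      ∫ z in (0:ℝ)..t, c * (mittagLefflerKernel α α l z * (t - z) ^ (1 - α - 1)) := by
    rw [intervalIntegral.integral_of_le ht.le, intervalIntegral.integral_of_le ht.le]
    refine setIntegral_congr_fun measurableSet_Ioc fun z hz => ?_
    rw [hderiv hz.1, mul_assoc]
    ring_nf
  have hΓ := (Real.Gamma_pos_of_pos (sub_pos.2 hα1)).ne'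
  rw [hint, intervalIntegral.integral_const_mul,
    integral_mittagLefflerKernel_mul_sub_rpow hα0 hα0 (sub_pos.2 hα1) l ht, add_sub_cancel]
  field_simp

section Backward

variable {β a c l : ℝ} {W : ℝ → ℝ}

theorem deriv_backward_mittagLefflerKernel (hβ1 : 1 < β)
    (hW : ∀ t, W t =
      a + c * (mittagLefflerKernel β 2 l (-t) + mittagLefflerKernel β (β + 1) l (-t)))
    {t : ℝ} (ht : t < 0) :
    deriv W t = -c * (mittagLefflerKernel β 1 l (-t) + mittagLefflerKernel β β l (-t)) := by
  have hβ0 : 0 < β := by linarith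
  have ht' : 0 < -t := by linarith
  have h1 := hasDerivAt_mittagLefflerKernel hβ0 one_pos l ht'
  have h2 := hasDerivAt_mittagLefflerKernel hβ0 hβ0 l ht'
  rw [one_add_one_eq_two] at h1
  have h := (((h1.add h2).comp t (hasDerivAt_neg t)).const_mul c).const_add a
  rw [funext hW]
  exact h.deriv.trans (by ring)

theorem deriv_deriv_backward_mittagLefflerKernel (hβ1 : 1 < β)
    (hW : ∀ t, W t =
      a + c * (mittagLefflerKernel β 2 l (-t) + mittagLefflerKernel β (β + 1) l (-t)))
    {t : ℝ} (ht : t < 0) :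
    deriv (deriv W) t =
      c * (l * mittagLefflerKernel β β l (-t) + mittagLefflerKernel β (β - 1) l (-t)) := by
  have hβ0 : 0 < β := by linarith
  have ht' : 0 < -t := by linarith
  have h1 := hasDerivAt_mittagLefflerKernel_one hβ0 l ht'
  have h2 := hasDerivAt_mittagLefflerKernel hβ0 (sub_pos.2 hβ1) l ht'
  rw [sub_add_cancel] at h2
  have h := ((h1.add h2).comp t (hasDerivAt_neg t)).const_mul (-c)
  have heq : deriv W =ᶠ[nhds t] fun t =>
      -c * (mittagLefflerKernel β 1 l (-t) + mittagLefflerKernel β β l (-t)) := by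
    filter_upwards [gt_mem_nhds ht] with x hx using deriv_backward_mittagLefflerKernel hβ1 hW hx
  rw [heq.deriv_eq]
  exact h.deriv.trans (by ring)

/-- The backward Caputo derivative of order `β` of
`t ↦ a + c ((-t) E_{β,2}(l (-t) ^ β) + (-t) ^ β E_{β,β+1}(l (-t) ^ β))`. -/
theorem backward_caputo_mittagLefflerKernel (hβ1 : 1 < β) (hβ2 : β < 2)
    (hW : ∀ t, W t =
      a + c * (mittagLefflerKernel β 2 l (-t) + mittagLefflerKernel β (β + 1) l (-t)))
    {t : ℝ} (ht : t < 0) :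
    (1 / Real.Gamma (2 - β)) * (∫ z in t..(0:ℝ), deriv (deriv W) z * (z - t) ^ (1 - β)) =
      c * (l * mittagLefflerKernel β 2 l (-t) + mittagLefflerKernel β 1 l (-t)) := by
  have hβ0 : 0 < β := by linarith
  have hβ' : 0 < β - 1 := by linarith
  have hr : 0 < 2 - β := by linarith
  have ht' : 0 < -t := by linarith
  let F : ℝ → ℝ := fun x =>
    c * l * (mittagLefflerKernel β β l x * (-t - x) ^ (2 - β - 1)) +
      c * (mittagLefflerKernel β (β - 1) l x * (-t - x) ^ (2 - β - 1))
  have hint : ∫ z in t..(0:ℝ), deriv (deriv W) z * (z - t) ^ (1 - β) = ∫ x in (0:ℝ)..(-t), F x := by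
    have hneg := intervalIntegral.integral_comp_neg (a := t) (b := 0) F
    rw [neg_zero] at hneg
    rw [← hneg, intervalIntegral.integral_of_le ht.le, intervalIntegral.integral_of_le ht.le,
      integral_Ioc_eq_integral_Ioo, integral_Ioc_eq_integral_Ioo]
    refine setIntegral_congr_fun measurableSet_Ioo fun z hz => ?_
    simp only [F]
    rw [deriv_deriv_backward_mittagLefflerKernel hβ1 hW hz.2, show -t - -z = z - t by ring,
      show 2 - β - 1 = 1 - β by ring]
    ring
  have hΓ := (Real.Gamma_pos_of_pos hr).ne'
  rw [hint, intervalIntegral.integral_add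
      ((intervalIntegrable_mittagLefflerKernel_mul_sub_rpow hβ0 hβ0 hr l ht').const_mul _)
      ((intervalIntegrable_mittagLefflerKernel_mul_sub_rpow hβ0 hβ' hr l ht').const_mul _),
    intervalIntegral.integral_const_mul, intervalIntegral.integral_const_mul,
    integral_mittagLefflerKernel_mul_sub_rpow hβ0 hβ0 hr l ht',
    integral_mittagLefflerKernel_mul_sub_rpow hβ0 hβ' hr l ht', add_sub_cancel,
    show β - 1 + (2 - β) = 1 by ring]
  field_simp

end Backward

/-- Nontrivial m-th sine-mode solution when `Δ_m = 0`: with `μ = (2mπ)²`, `c ≠ 0`,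
`f₂ = c E_{α,1}(−μ q^α)`, `a = −c q^α E_{α,α+1}(−μ q^α)`,
`V(t) = a E_{α,1}(−μ t^α) + f₂ t^α E_{α,α+1}(−μ t^α)` and
`W(t) = a E_{β,1}(−μ(−t)^β) − t c E_{β,2}(−μ(−t)^β) + f₂(−t)^β E_{β,β+1}(−μ(−t)^β)`,
the pair `(V, W)` solves the m-th mode transmission problem nontrivially. -/
theorem nontrivial_mth_mode (α β p q : ℝ)
    (hα0 : 0 < α) (hα1 : α < 1) (hβ1 : 1 < β) (hβ2 : β < 2) (hp : 0 < p) (hq : 0 < q)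
    (m : ℕ) (hm : 1 ≤ m) (μ : ℝ) (hμ : μ = (2 * m * π) ^ 2)
    (hΔm : p ^ β * mittagLeffler β (β + 1) (-μ * p ^ β)
        + p * mittagLeffler β 2 (-μ * p ^ β)
        - q ^ α * mittagLeffler α (α + 1) (-μ * q ^ α) = 0)
    (c : ℝ) (hc : c ≠ 0) (f₂ a : ℝ)
    (hf₂ : f₂ = c * mittagLeffler α 1 (-μ * q ^ α))
    (ha : a = -c * q ^ α * mittagLeffler α (α + 1) (-μ * q ^ α))
    (V W : ℝ → ℝ)
    (hV : ∀ t : ℝ, V t =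
      a * mittagLeffler α 1 (-μ * t ^ α) + f₂ * t ^ α * mittagLeffler α (α + 1) (-μ * t ^ α))
    (hW : ∀ t : ℝ, W t =
      a * mittagLeffler β 1 (-μ * (-t) ^ β) - t * c * mittagLeffler β 2 (-μ * (-t) ^ β)
        + f₂ * (-t) ^ β * mittagLeffler β (β + 1) (-μ * (-t) ^ β)) :
    -- (i) the forward fractional ODE on (0,q)
    (∀ t ∈ Set.Ioo (0:ℝ) q,
      (1 / Real.Gamma (1 - α)) * (∫ z in (0:ℝ)..t, deriv V z * (t - z) ^ (-α))
        + μ * V t = f₂) ∧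
    -- (ii) the backward fractional ODE on (−p,0)
    (∀ t ∈ Set.Ioo (-p) (0:ℝ),
      (1 / Real.Gamma (2 - β)) * (∫ z in t..(0:ℝ), deriv (deriv W) z * (z - t) ^ (1 - β))
        + μ * W t = f₂) ∧
    -- (iii) matching
    V 0 = W 0 ∧
    -- (iv) boundary conditions
    V q = 0 ∧ W (-p) = 0 ∧
    -- (v) the transmitting condition, with common value c
    Filter.Tendsto
      (fun t => (1 / Real.Gamma (1 - α)) * ∫ z in (0:ℝ)..t, deriv V z * (t - z) ^ (-α))
      (nhdsWithin 0 (Set.Ioi 0)) (nhds c) ∧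
    Filter.Tendsto (fun t => -(deriv W t)) (nhdsWithin 0 (Set.Iio 0)) (nhds c) := by
  have hβ0 : 0 < β := by linarith
  have hc₀ : f₂ - μ * a = c := by
    rw [hf₂, ha, mittagLeffler_eq_add hα0 1]
    simp
    ring
  have hV' (t : ℝ) : V t = a + c * mittagLefflerKernel α (α + 1) (-μ) t := by
    rw [hV, ← hc₀, mittagLefflerKernel, mittagLeffler_eq_add hα0 1, add_sub_cancel_right]
    simp
    ring
  have hW' (t : ℝ) : W t = a + c * (mittagLefflerKernel β 2 (-μ) (-t) +
      mittagLefflerKernel β (β + 1) (-μ) (-t)) := by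
    rw [hW, mul_add, mittagLefflerKernel, mittagLefflerKernel, mittagLeffler_eq_add hβ0 1,
      add_sub_cancel_right, show (2 : ℝ) - 1 = 1 by norm_num, rpow_one, Gamma_one]
    linear_combination (-t) ^ β * mittagLeffler β (β + 1) (-μ * (-t) ^ β) * hc₀
  refine ⟨fun t ht => ?_, fun t ht => ?_, ?_, ?_, ?_, ?_, ?_⟩
  · rw [caputo_const_add_mittagLefflerKernel hα0 hα1 a c (-μ) hV' ht.1, hV',
      mittagLefflerKernel_one hα0]
    linear_combination -hc₀
  · rw [backward_caputo_mittagLefflerKernel hβ1 hβ2 hW' ht.2, hW', mittagLefflerKernel_one hβ0]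
    linear_combination -hc₀
  · rw [hV', hW', neg_zero, mittagLefflerKernel_zero _ _ (by linarith),
      mittagLefflerKernel_zero _ _ one_lt_two, mittagLefflerKernel_zero _ _ (by linarith), add_zero]
  · rw [hV', ha, mittagLefflerKernel, add_sub_cancel_right]
    ring
  · rw [hW', ha, mittagLefflerKernel, mittagLefflerKernel, add_sub_cancel_right, neg_neg,
      show (2 : ℝ) - 1 = 1 by norm_num, rpow_one]
    linear_combination c * hΔm
  · have h := ((continuous_mittagLefflerKernel hα0 le_rfl (-μ)).tendsto 0).const_mul c
    rw [mittagLefflerKernel_one hα0, mittagLefflerKernel_zero _ _ (by linarith), mul_zero,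
      add_zero, mul_one] at h
    refine (h.mono_left nhdsWithin_le_nhds).congr' ?_
    filter_upwards [self_mem_nhdsWithin] with t ht
    exact (caputo_const_add_mittagLefflerKernel hα0 hα1 a c (-μ) hV' ht).symm
  · have h := ((((continuous_mittagLefflerKernel hβ0 le_rfl (-μ)).add
      (continuous_mittagLefflerKernel hβ0 hβ1.le (-μ))).comp continuous_neg).tendsto 0).const_mul c
    simp only [Function.comp, Pi.add_apply, neg_zero] at h
    rw [mittagLefflerKernel_one hβ0, mittagLefflerKernel_zero _ _ (by linarith),
      mittagLefflerKernel_zero _ _ hβ1, mul_zero, add_zero, add_zero, mul_one] at h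
    refine (h.mono_left nhdsWithin_le_nhds).congr' ?_
    filter_upwards [self_mem_nhdsWithin] with t ht
    rw [deriv_backward_mittagLefflerKernel hβ1 hW' ht]
    ring
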